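/- Let S be a pairwise-stable matching in G. Then for every matching T in G with |T| < |S| we have Δ(S,T) > 0; consequently no matching smaller than S is weakly popular, and S is both a minimum-size popular matching and a minimum-size weakly popular matching in G. -/

import Mathlib

/-!
Many-to-many matchings with two-sided preferences, votes, and popularity,
following "Popular Matchings in the Many-to-Many Setting".
-/

/-- The vote of a vertex with rank function `r` (smaller rank = more preferred)
comparing two options, where `none` stands for `null` (ranked below everything). -/
def vote {β : Type*} [DecidableEq β] (r : β → ℕ) : Option β → Option β → ℤ
  | none, none => 0
  | some _, none => 1
  | none, some _ => -1
  | some x, some y => if x = y then 0 else if r x < r y then 1 else -1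

/-- The common length `k` of the arrays compared in `δ_u(S₀,S₁)`:
after padding the smaller of `S₀, S₁` with nulls and removing common elements. -/
def kOf {β : Type*} [DecidableEq β] (S₀ S₁ : Finset β) : ℕ :=
  max S₀.card S₁.card - (S₀ ∩ S₁).card

/-- `S₀ ∖ S₁`, viewed as an array of `Option`s padded with `none` (null) to length `k`. -/
noncomputable def padded {β : Type*} [DecidableEq β] (S₀ S₁ : Finset β) (k : ℕ) : List (Option β) :=
  ((S₀ \ S₁).toList.map some) ++ List.replicate (k - (S₀ \ S₁).card) none

/-- `δ_u(S₀,S₁)`: the minimum, over all permutations `σ` of `{1,…,k}`, of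
`Σ_i vote_u(S'₀[i], S'₁[σ(i)])`. -/
noncomputable def deltaSet {β : Type*} [DecidableEq β] (r : β → ℕ) (S₀ S₁ : Finset β) : ℤ :=
  Finset.univ.inf' ⟨1, Finset.mem_univ 1⟩ fun σ : Equiv.Perm (Fin (kOf S₀ S₁)) =>
    ∑ i : Fin (kOf S₀ S₁),
      vote r ((padded S₀ S₁ (kOf S₀ S₁)).getD (i : ℕ) none)
             ((padded S₁ S₀ (kOf S₀ S₁)).getD (σ i : ℕ) none)

/-- A bipartite instance `G = (A ∪ B, E)` with capacities `≥ 1` and strict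
preferences of every vertex over its neighbors (given by injective-on-neighbors
rank functions; smaller rank = more preferred). -/
structure PrefInstance (α β : Type*) [Fintype α] [Fintype β] [DecidableEq α] [DecidableEq β] where
  E : Finset (α × β)
  capA : α → ℕ
  capB : β → ℕ
  rankA : α → β → ℕ
  rankB : β → α → ℕ
  capA_pos : ∀ a, 1 ≤ capA a
  capB_pos : ∀ b, 1 ≤ capB b
  rankA_injOn : ∀ a, Set.InjOn (rankA a) {b | (a, b) ∈ E}
  rankB_injOn : ∀ b, Set.InjOn (rankB b) {a | (a, b) ∈ E}

namespace PrefInstance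

variable {α β : Type*} [Fintype α] [Fintype β] [DecidableEq α] [DecidableEq β]

/-- `M(a)`: the set of `B`-vertices matched to `a` in `M`. -/
def rowSet (M : Finset (α × β)) (a : α) : Finset β :=
  Finset.univ.filter fun b => (a, b) ∈ M

/-- `M(b)`: the set of `A`-vertices matched to `b` in `M`. -/
def colSet (M : Finset (α × β)) (b : β) : Finset α :=
  Finset.univ.filter fun a => (a, b) ∈ M

variable (I : PrefInstance α β)

/-- `M` is a matching in `G`: a subset of `E` respecting all capacities. -/
def IsMatching (M : Finset (α × β)) : Prop :=
  M ⊆ I.E ∧ (∀ a, (rowSet M a).card ≤ I.capA a) ∧ (∀ b, (colSet M b).card ≤ I.capB b)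

/-- `Δ_a(M₀,M₁) = δ_a(M₀(a), M₁(a))` for `a ∈ A`. -/
noncomputable def DeltaA (M₀ M₁ : Finset (α × β)) (a : α) : ℤ :=
  deltaSet (I.rankA a) (rowSet M₀ a) (rowSet M₁ a)

/-- `Δ_b(M₀,M₁) = δ_b(M₀(b), M₁(b))` for `b ∈ B`. -/
noncomputable def DeltaB (M₀ M₁ : Finset (α × β)) (b : β) : ℤ :=
  deltaSet (I.rankB b) (colSet M₀ b) (colSet M₁ b)

/-- `Δ(M₀,M₁) = Σ_{u ∈ A∪B} Δ_u(M₀,M₁)`. -/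
noncomputable def Delta (M₀ M₁ : Finset (α × β)) : ℤ :=
  (∑ a, I.DeltaA M₀ M₁ a) + ∑ b, I.DeltaB M₀ M₁ b

/-- `M` is a popular matching: `Δ(M,T) ≥ 0` against every matching `T`. -/
def Popular (M : Finset (α × β)) : Prop :=
  I.IsMatching M ∧ ∀ T, I.IsMatching T → 0 ≤ I.Delta M T

/-- `M` is a weakly popular matching: `Δ(T,M) ≤ 0` for every matching `T`. -/
def WeaklyPopular (M : Finset (α × β)) : Prop :=
  I.IsMatching M ∧ ∀ T, I.IsMatching T → I.Delta T M ≤ 0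

/-- The edge `(a,b) ∈ E ∖ M` blocks `M`. -/
def Blocks (M : Finset (α × β)) (a : α) (b : β) : Prop :=
  (a, b) ∈ I.E ∧ (a, b) ∉ M ∧
  ((rowSet M a).card < I.capA a ∨ ∃ b' ∈ rowSet M a, I.rankA a b < I.rankA a b') ∧
  ((colSet M b).card < I.capB b ∨ ∃ a' ∈ colSet M b, I.rankB b a < I.rankB b a')

/-- `M` is a pairwise-stable matching: no edge blocks it. -/
def Stable (M : Finset (α × β)) : Prop :=
  I.IsMatching M ∧ ∀ a b, ¬ I.Blocks M a b

end PrefInstance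

/-!
An edge `(a, b)` of `T ∖ S` does not block `S`, so one of its endpoints is saturated by `S` and
prefers all its `S`-partners to the other endpoint. However that endpoint assigns its partners, it
votes `+1` for `S` on this edge, since it has no null on the `S`-side; the other endpoint votes at
least `-1`. Hence the edges of `T ∖ S` contribute at least `0` in total. What is left are the
comparisons of an `S`-partner with a null: at `u` there are `|S(u)| - |T(u)|` of them (truncated
subtraction), each worth `+1`. Summing these over `A` and over `B` gives
`Δ(S, T) ≥ 2 (|S| - |T|)`, again with truncated subtraction, so that the right-hand side is never
negative.

Weak popularity follows from popularity because `Δ(T, S) ≤ -Δ(S, T)`: reversing an assignment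
negates its total vote, and both `Δ` are minima.
-/

section Votes

variable {β : Type*} [DecidableEq β]

lemma neg_one_le_vote (r : β → ℕ) (x y : Option β) : -1 ≤ vote r x y := by
  unfold vote
  split <;> (try split_ifs) <;> decide

lemma vote_some_some_of_lt {r : β → ℕ} {s t : β} (h : r s < r t) :
    vote r (some s) (some t) = 1 := by
  have hne : s ≠ t := by
    rintro rfl
    exact h.false
  simp [vote, hne, h]

lemma vote_swap {r : β → ℕ} {x y : Option β} (hr : ∀ s ∈ x, ∀ t ∈ y, r s = r t → s = t) :
    vote r y x = -vote r x y := by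
  rcases x with _ | s <;> rcases y with _ | t <;> try rfl
  have hst : r s = r t → s = t := hr s rfl t rfl
  simp only [vote]
  grind

end Votes

section PaddedArrays

variable {β : Type*} [DecidableEq β]

lemma kOf_comm (S T : Finset β) : kOf S T = kOf T S := by
  rw [kOf, kOf, max_comm, Finset.inter_comm]

lemma kOf_eq_card_sdiff_add (S T : Finset β) :
    kOf S T = (S \ T).card + (T.card - S.card) := by
  have hS := Finset.card_sdiff_add_card_inter S T
  have hT := Finset.card_le_card (Finset.inter_subset_right (s₁ := S) (s₂ := T))
  unfold kOf
  omega

lemma card_sdiff_le_kOf (S T : Finset β) : (S \ T).card ≤ kOf S T := by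
  rw [kOf_eq_card_sdiff_add]
  exact Nat.le_add_right _ _

lemma card_sdiff_le_kOf' (S T : Finset β) : (T \ S).card ≤ kOf S T :=
  kOf_comm T S ▸ card_sdiff_le_kOf T S

lemma some_mem_padded {S T : Finset β} {k : ℕ} {x : β} :
    some x ∈ padded S T k ↔ x ∈ S \ T := by
  simp [padded]

lemma none_mem_padded {S T : Finset β} {k : ℕ} :
    none ∈ padded S T k ↔ (S \ T).card < k := by
  simp [padded, Nat.sub_eq_zero_iff_le]

lemma length_padded {S T : Finset β} {k : ℕ} (hk : (S \ T).card ≤ k) :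
    (padded S T k).length = k := by
  simp [padded, hk]

lemma getD_padded_mem {S T : Finset β} {k i : ℕ} (hk : (S \ T).card ≤ k) (hi : i < k) :
    (padded S T k).getD i none ∈ padded S T k := by
  rw [List.getD_eq_getElem _ _ (hi.trans_eq (length_padded hk).symm)]
  exact List.getElem_mem _

lemma sum_getD_padded {M : Type*} [AddCommMonoid M] {S T : Finset β} {k : ℕ}
    (hk : (S \ T).card ≤ k) (g : Option β → M) :
    ∑ i : Fin k, g ((padded S T k).getD i none)
      = ∑ s ∈ S \ T, g (some s) + (k - (S \ T).card) • g none := by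
  have hsum : ∑ i : Fin k, g ((padded S T k).getD i none) = ((padded S T k).map g).sum := by
    conv_lhs => rw [← Fin.sum_congr' _ (length_padded hk)]
    rw [← Fin.sum_univ_fun_getElem]
    exact Finset.sum_congr rfl fun i _ => by simp
  rw [hsum]
  simp [padded, Function.comp_def]

end PaddedArrays

section DeltaSet

variable {β : Type*} [DecidableEq β]

lemma le_deltaSet_of_le_vote {r : β → ℕ} {S T : Finset β} (g : Option β → ℤ)
    (hg : ∀ x ∈ padded S T (kOf S T), ∀ y ∈ padded T S (kOf S T), g y ≤ vote r x y) :
    ∑ t ∈ T \ S, g (some t) + (S.card - T.card) • g none ≤ deltaSet r S T := by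
  have hnull : kOf S T - (T \ S).card = S.card - T.card := by
    rw [kOf_comm, kOf_eq_card_sdiff_add, Nat.add_sub_cancel_left]
  refine Finset.le_inf' _ _ fun σ _ => ?_
  calc ∑ t ∈ T \ S, g (some t) + (S.card - T.card) • g none
      = ∑ i : Fin (kOf S T), g ((padded T S (kOf S T)).getD i none) := by
        rw [sum_getD_padded (card_sdiff_le_kOf' S T), hnull]
    _ = ∑ i, g ((padded T S (kOf S T)).getD (σ i) none) := (Equiv.sum_comp σ _).symm
    _ ≤ _ := Finset.sum_le_sum fun i _ =>
        hg _ (getD_padded_mem (card_sdiff_le_kOf S T) i.2)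
          _ (getD_padded_mem (card_sdiff_le_kOf' S T) (σ i).2)

-- The sum runs over `Finset.range` so that `kOf S T` can be rewritten with `kOf_comm`.
lemma deltaSet_le_sum_range (r : β → ℕ) (S T : Finset β) :
    deltaSet r S T ≤ ∑ i ∈ Finset.range (kOf S T),
      vote r ((padded S T (kOf S T)).getD i none) ((padded T S (kOf S T)).getD i none) := by
  rw [Finset.sum_range]
  exact Finset.inf'_le _ (Finset.mem_univ (1 : Equiv.Perm (Fin (kOf S T))))

lemma deltaSet_swap_le_neg {r : β → ℕ} {S T : Finset β}
    (hr : Set.InjOn r (S ∪ T : Set β)) : deltaSet r T S ≤ -deltaSet r S T := by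
  refine (deltaSet_le_sum_range r T S).trans
    (le_of_eq_of_le ?_ (neg_le_neg (deltaSet_le_sum_range r S T)))
  rw [kOf_comm T S, ← Finset.sum_neg_distrib]
  refine Finset.sum_congr rfl fun i hi => vote_swap fun s hs t ht => ?_
  have hi : i < kOf S T := Finset.mem_range.1 hi
  have hs : s ∈ S \ T := some_mem_padded.1 (hs ▸ getD_padded_mem (card_sdiff_le_kOf S T) hi)
  have ht : t ∈ T \ S := some_mem_padded.1 (ht ▸ getD_padded_mem (card_sdiff_le_kOf' S T) hi)
  exact fun h => hr (Or.inl (Finset.sdiff_subset hs)) (Or.inr (Finset.sdiff_subset ht)) h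

end DeltaSet

section Rejection

variable {β : Type*}

/-- A vertex with rank function `r` and capacity `c` that holds the partners `S` rejects `t`: it is
saturated and prefers all of `S` to `t`. An edge blocks a matching when neither of its endpoints
rejects the other. -/
def Rejects (r : β → ℕ) (c : ℕ) (S : Finset β) (t : β) : Prop :=
  S.card = c ∧ ∀ s ∈ S, r s < r t

instance (r : β → ℕ) (c : ℕ) (S : Finset β) (t : β) : Decidable (Rejects r c S t) :=
  inferInstanceAs (Decidable (_ ∧ _))

lemma not_rejects_iff {r : β → ℕ} {c : ℕ} {S : Finset β} {t : β} (hr : ∀ s ∈ S, r s ≠ r t)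
    (hc : S.card ≤ c) : ¬ Rejects r c S t ↔ S.card < c ∨ ∃ s ∈ S, r t < r s := by
  have hlt : (∀ s ∈ S, r s < r t) ↔ ∀ s ∈ S, r s ≤ r t :=
    forall₂_congr fun s hs => (hr s hs).le_iff_lt.symm
  rw [Rejects, hlt, not_and_or, hc.lt_iff_ne]
  push Not
  rfl

/-- The vote on `t` that a vertex holding the partners `S` is sure to cast, whichever element of `S`
(or null) is compared with `t`; nulls are excluded only when the set containing `t` respects the
capacity `c`. -/
def securedVote (r : β → ℕ) (c : ℕ) (S : Finset β) (t : β) : ℤ :=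
  if Rejects r c S t then 1 else -1

lemma securedVote_add_securedVote_nonneg {γ : Type*} {r : β → ℕ} {r' : γ → ℕ} {c c' : ℕ}
    {S : Finset β} {S' : Finset γ} {t : β} {t' : γ}
    (h : Rejects r c S t ∨ Rejects r' c' S' t') :
    0 ≤ securedVote r c S t + securedVote r' c' S' t' := by
  unfold securedVote
  split_ifs <;> simp_all

variable [DecidableEq β]

lemma securedVote_le_vote {r : β → ℕ} {c : ℕ} {S T : Finset β} (hT : T.card ≤ c) {x : Option β}
    (hx : x ∈ padded S T (kOf S T)) (t : β) : securedVote r c S t ≤ vote r x (some t) := by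
  unfold securedVote
  split_ifs with h
  · obtain ⟨hcard, hlt⟩ := h
    rcases x with _ | s
    · have hST : S.card < T.card := by
        rw [none_mem_padded, kOf_eq_card_sdiff_add] at hx
        omega
      exact absurd (hST.trans_le hT) hcard.not_lt
    · have hs : s ∈ S := Finset.sdiff_subset (some_mem_padded.1 hx)
      exact (vote_some_some_of_lt (hlt s hs)).ge
  · exact neg_one_le_vote r x (some t)

lemma sum_securedVote_add_le_deltaSet (r : β → ℕ) {c : ℕ} (S : Finset β) {T : Finset β}
    (hT : T.card ≤ c) :
    ∑ t ∈ T \ S, securedVote r c S t + (S.card - T.card : ℕ) ≤ deltaSet r S T := by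
  have hvote : ∀ x ∈ padded S T (kOf S T), ∀ y ∈ padded T S (kOf S T),
      y.elim 1 (securedVote r c S) ≤ vote r x y := by
    rintro x hx (_ | t) hy
    · rcases x with _ | s
      · rw [none_mem_padded, kOf_eq_card_sdiff_add] at hx
        rw [none_mem_padded, kOf_comm, kOf_eq_card_sdiff_add] at hy
        omega
      · rfl
    · exact securedVote_le_vote hT hx t
  simpa using le_deltaSet_of_le_vote _ hvote

end Rejection

lemma sum_tsub_sum_le_sum_tsub {ι M : Type*} [AddCommMonoid M] [PartialOrder M]
    [IsOrderedAddMonoid M] [Sub M] [OrderedSub M] (s : Finset ι) (f g : ι → M) :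
    ∑ i ∈ s, f i - ∑ i ∈ s, g i ≤ ∑ i ∈ s, (f i - g i) := by
  rw [tsub_le_iff_right, ← Finset.sum_add_distrib]
  exact Finset.sum_le_sum fun _ _ => le_tsub_add

namespace PrefInstance

variable {α β : Type*} [DecidableEq α] [DecidableEq β]

lemma mem_rowSet [Fintype β] {M : Finset (α × β)} {a : α} {b : β} :
    b ∈ rowSet M a ↔ (a, b) ∈ M := by
  simp [rowSet]

lemma mem_colSet [Fintype α] {M : Finset (α × β)} {a : α} {b : β} :
    a ∈ colSet M b ↔ (a, b) ∈ M := by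
  simp [colSet]

lemma rowSet_sdiff [Fintype β] (M N : Finset (α × β)) (a : α) :
    rowSet (M \ N) a = rowSet M a \ rowSet N a := by
  ext b
  simp [mem_rowSet]

lemma colSet_sdiff [Fintype α] (M N : Finset (α × β)) (b : β) :
    colSet (M \ N) b = colSet M b \ colSet N b := by
  ext a
  simp [mem_colSet]

variable [Fintype α] [Fintype β]

lemma sum_rowSet {R : Type*} [AddCommMonoid R] (M : Finset (α × β)) (f : α → β → R) :
    ∑ a, ∑ b ∈ rowSet M a, f a b = ∑ e ∈ M, f e.1 e.2 :=
  (Finset.sum_finset_product' M Finset.univ (rowSet M)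
    fun _ => by simp only [Finset.mem_univ, true_and, mem_rowSet]).symm

lemma sum_colSet {R : Type*} [AddCommMonoid R] (M : Finset (α × β)) (f : α → β → R) :
    ∑ b, ∑ a ∈ colSet M b, f a b = ∑ e ∈ M, f e.1 e.2 :=
  (Finset.sum_finset_product_right' M Finset.univ (colSet M)
    fun _ => by simp only [Finset.mem_univ, true_and, mem_colSet]).symm

lemma sum_card_rowSet (M : Finset (α × β)) : ∑ a, (rowSet M a).card = M.card := by
  simpa using sum_rowSet M fun _ _ => (1 : ℕ)

lemma sum_card_colSet (M : Finset (α × β)) : ∑ b, (colSet M b).card = M.card := by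
  simpa using sum_colSet M fun _ _ => (1 : ℕ)

variable {I : PrefInstance α β} {M S T : Finset (α × β)}

lemma coe_rowSet_subset (hM : M ⊆ I.E) (a : α) : (rowSet M a : Set β) ⊆ {b | (a, b) ∈ I.E} :=
  fun _ hb => hM (mem_rowSet.1 hb)

lemma coe_colSet_subset (hM : M ⊆ I.E) (b : β) : (colSet M b : Set α) ⊆ {a | (a, b) ∈ I.E} :=
  fun _ ha => hM (mem_colSet.1 ha)

lemma delta_swap_le_neg (hS : S ⊆ I.E) (hT : T ⊆ I.E) : I.Delta T S ≤ -I.Delta S T := by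
  have hA : ∀ a, I.DeltaA T S a ≤ -I.DeltaA S T a := fun a => deltaSet_swap_le_neg <|
    (I.rankA_injOn a).mono <| Set.union_subset (coe_rowSet_subset hS a) (coe_rowSet_subset hT a)
  have hB : ∀ b, I.DeltaB T S b ≤ -I.DeltaB S T b := fun b => deltaSet_swap_le_neg <|
    (I.rankB_injOn b).mono <| Set.union_subset (coe_colSet_subset hS b) (coe_colSet_subset hT b)
  rw [Delta, Delta, neg_add, ← Finset.sum_neg_distrib, ← Finset.sum_neg_distrib]
  exact add_le_add (Finset.sum_le_sum fun a _ => hA a) (Finset.sum_le_sum fun b _ => hB b)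

lemma Popular.weaklyPopular (hM : I.Popular M) : I.WeaklyPopular M :=
  ⟨hM.1, fun T hT => (delta_swap_le_neg hM.1.1 hT.1).trans (neg_nonpos.2 (hM.2 T hT))⟩

lemma Stable.rejects_or_rejects (hS : I.Stable S) {a : α} {b : β} (hE : (a, b) ∈ I.E)
    (hab : (a, b) ∉ S) :
    Rejects (I.rankA a) (I.capA a) (rowSet S a) b ∨
      Rejects (I.rankB b) (I.capB b) (colSet S b) a := by
  obtain ⟨⟨hSE, hcapA, hcapB⟩, hblock⟩ := hS
  by_contra! h
  have hA : ∀ b' ∈ rowSet S a, I.rankA a b' ≠ I.rankA a b := fun b' hb' heq =>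
    hab (I.rankA_injOn a (coe_rowSet_subset hSE a hb') hE heq ▸ mem_rowSet.1 hb')
  have hB : ∀ a' ∈ colSet S b, I.rankB b a' ≠ I.rankB b a := fun a' ha' heq =>
    hab (I.rankB_injOn b (coe_colSet_subset hSE b ha') hE heq ▸ mem_colSet.1 ha')
  exact hblock a b ⟨hE, hab,
    (not_rejects_iff hA (hcapA a)).1 h.1, (not_rejects_iff hB (hcapB b)).1 h.2⟩

lemma sum_securedVote_add_le_sum_deltaA (hT : ∀ a, (rowSet T a).card ≤ I.capA a) :
    ∑ e ∈ T \ S, securedVote (I.rankA e.1) (I.capA e.1) (rowSet S e.1) e.2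
      + (S.card - T.card : ℕ) ≤ ∑ a, I.DeltaA S T a := by
  have hcard : S.card - T.card ≤ ∑ a, ((rowSet S a).card - (rowSet T a).card) := by
    simpa only [sum_card_rowSet] using
      sum_tsub_sum_le_sum_tsub Finset.univ (fun a => (rowSet S a).card)
        fun a => (rowSet T a).card
  rw [← sum_rowSet _ fun a b => securedVote (I.rankA a) (I.capA a) (rowSet S a) b]
  refine (add_le_add_right (Nat.cast_le.2 hcard) _).trans ?_
  rw [Nat.cast_sum, ← Finset.sum_add_distrib]
  refine Finset.sum_le_sum fun a _ => ?_
  rw [rowSet_sdiff]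
  exact sum_securedVote_add_le_deltaSet _ _ (hT a)

lemma sum_securedVote_add_le_sum_deltaB (hT : ∀ b, (colSet T b).card ≤ I.capB b) :
    ∑ e ∈ T \ S, securedVote (I.rankB e.2) (I.capB e.2) (colSet S e.2) e.1
      + (S.card - T.card : ℕ) ≤ ∑ b, I.DeltaB S T b := by
  have hcard : S.card - T.card ≤ ∑ b, ((colSet S b).card - (colSet T b).card) := by
    simpa only [sum_card_colSet] using
      sum_tsub_sum_le_sum_tsub Finset.univ (fun b => (colSet S b).card)
        fun b => (colSet T b).card
  rw [← sum_colSet _ fun a b => securedVote (I.rankB b) (I.capB b) (colSet S b) a]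
  refine (add_le_add_right (Nat.cast_le.2 hcard) _).trans ?_
  rw [Nat.cast_sum, ← Finset.sum_add_distrib]
  refine Finset.sum_le_sum fun b _ => ?_
  rw [colSet_sdiff]
  exact sum_securedVote_add_le_deltaSet _ _ (hT b)

theorem Stable.two_mul_card_sub_card_le_delta (hS : I.Stable S) (hT : I.IsMatching T) :
    2 * ((S.card - T.card : ℕ) : ℤ) ≤ I.Delta S T := by
  obtain ⟨hTE, hcapA, hcapB⟩ := hT
  have hA := sum_securedVote_add_le_sum_deltaA (S := S) hcapA
  have hB := sum_securedVote_add_le_sum_deltaB (S := S) hcapB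
  have hedges : 0 ≤ ∑ e ∈ T \ S, securedVote (I.rankA e.1) (I.capA e.1) (rowSet S e.1) e.2
      + ∑ e ∈ T \ S, securedVote (I.rankB e.2) (I.capB e.2) (colSet S e.2) e.1 := by
    rw [← Finset.sum_add_distrib]
    refine Finset.sum_nonneg fun e he => securedVote_add_securedVote_nonneg ?_
    obtain ⟨heT, heS⟩ := Finset.mem_sdiff.1 he
    exact hS.rejects_or_rejects (hTE heT) heS
  unfold Delta
  linarith

theorem Stable.delta_pos (hS : I.Stable S) (hT : I.IsMatching T) (hlt : T.card < S.card) :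
    0 < I.Delta S T := by
  have := hS.two_mul_card_sub_card_le_delta hT
  omega

theorem Stable.popular (hS : I.Stable S) : I.Popular S :=
  ⟨hS.1, fun _ hT => le_trans (by positivity) (hS.two_mul_card_sub_card_le_delta hT)⟩

theorem WeaklyPopular.card_le_of_stable (hT : I.WeaklyPopular T) (hS : I.Stable S) :
    S.card ≤ T.card := by
  by_contra! hlt
  exact (hS.delta_pos hT.1 hlt).not_ge (hT.2 S hS.1)

end PrefInstance

/-- Let `S` be a pairwise-stable matching in `G`. Then `Δ(S,T) > 0`
for every matching `T` with `|T| < |S|`; consequently no matching smaller than `S` is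
weakly popular, and `S` is both a minimum-size popular matching and a minimum-size
weakly popular matching in `G`. -/
theorem statement14 {α β : Type*} [Fintype α] [Fintype β] [DecidableEq α] [DecidableEq β]
    (I : PrefInstance α β) (S : Finset (α × β)) (hS : I.Stable S) :
    (∀ T : Finset (α × β), I.IsMatching T → T.card < S.card → 0 < I.Delta S T) ∧
    I.Popular S ∧ I.WeaklyPopular S ∧
    (∀ T : Finset (α × β), I.Popular T → S.card ≤ T.card) ∧
    (∀ T : Finset (α × β), I.WeaklyPopular T → S.card ≤ T.card) :=
  ⟨fun _ hT hlt => hS.delta_pos hT hlt, hS.popular, hS.popular.weaklyPopular,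
    fun _ hT => hT.weaklyPopular.card_le_of_stable hS, fun _ hT => hT.card_le_of_stable hS⟩
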